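/- arXiv:1404.1106 — 2 statements merged into one kernel-verified Lean document; each statement's English description precedes it below -/
import Mathlib

section
/- For every integer k ≥ 0, ∫_{−1}^{1} (2 − 2t)^{1/2} P_k'(t) dt = 2(−1)^{k+1} + 2/(2k+1). -/
/-- `C` is the family of Gegenbauer (ultraspherical) polynomials with parameter `α`,
characterized by the generating function `(1 - 2rt + r²)^(-α) = Σ_k C_k^α(t) r^k`
for `t ∈ [-1, 1]` and `|r|` small. -/
def IsGegenbauer (α : ℝ) (C : ℕ → Polynomial ℝ) : Prop :=
  ∀ t ∈ Set.Icc (-1:ℝ) 1, ∀ r : ℝ, |r| < 1/2 →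
    HasSum (fun k : ℕ => (C k).eval t * r ^ k) ((1 - 2*r*t + r^2) ^ (-α))

/-- The Legendre polynomials are the Gegenbauer polynomials with parameter `1/2`. -/
def IsLegendre (P : ℕ → Polynomial ℝ) : Prop := IsGegenbauer (1/2) P

/-- a power series converging to `v r` for small `r` -/
def SumsTo (F : PowerSeries ℝ) (v : ℝ → ℝ) : Prop :=
  ∀ r : ℝ, |r| < 1/2 → HasSum (fun k : ℕ => PowerSeries.coeff k F * r ^ k) (v r)

lemma SumsTo.mul {F G : PowerSeries ℝ} {v w : ℝ → ℝ} (hF : SumsTo F v) (hG : SumsTo G w) :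
    SumsTo (F * G) (fun r => v r * w r) := by
  intro r hr
  have h1 := hF r hr
  have h2 := hG r hr
  have e : (fun k : ℕ => PowerSeries.coeff k (F * G) * r ^ k) = fun n =>
      ∑ p ∈ Finset.HasAntidiagonal.antidiagonal n, (PowerSeries.coeff p.1 F * r ^ p.1) *
        (PowerSeries.coeff p.2 G * r ^ p.2) := by
    funext n
    rw [PowerSeries.coeff_mul, Finset.sum_mul]
    refine Finset.sum_congr rfl fun p hp => ?_
    rw [← Finset.HasAntidiagonal.mem_antidiagonal.mp hp, pow_add]
    ring
  rw [e]
  beta_reduce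
  rw [← h1.tsum_eq, ← h2.tsum_eq]
  have n1 := h1.summable.norm
  have n2 := h2.summable.norm
  rw [tsum_mul_tsum_eq_tsum_sum_antidiagonal_of_summable_norm n1 n2]
  exact (summable_norm_sum_mul_antidiagonal_of_summable_norm n1 n2).of_norm.hasSum

lemma SumsTo.unique {F G : PowerSeries ℝ} {v : ℝ → ℝ} (hF : SumsTo F v) (hG : SumsTo G v) :
    F = G := by
  have key : HasFPowerSeriesAt (0 : ℝ → ℝ)
      (FormalMultilinearSeries.ofScalars ℝ (fun k => PowerSeries.coeff k (F - G))) 0 := by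
    rw [hasFPowerSeriesAt_iff]
    filter_upwards [Metric.ball_mem_nhds (0:ℝ) (by norm_num : (0:ℝ) < 1/2)] with z hz
    have hz' : |z| < 1/2 := by simpa using hz
    have := (hF z hz').sub (hG z hz')
    simp only [sub_self] at this
    have e : (fun n => z ^ n • (FormalMultilinearSeries.ofScalars ℝ
        (fun k => PowerSeries.coeff k (F - G)) : FormalMultilinearSeries ℝ ℝ ℝ).coeff n) =
        fun b => PowerSeries.coeff b F * z ^ b - PowerSeries.coeff b G * z ^ b := by
      funext k
      rw [FormalMultilinearSeries.coeff_ofScalars, map_sub, smul_eq_mul]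
      ring
    rw [e]
    exact this
  have h0 := key.eq_zero
  ext k
  have : (FormalMultilinearSeries.ofScalars ℝ
    (fun k => PowerSeries.coeff k (F - G)) : FormalMultilinearSeries ℝ ℝ ℝ).coeff k = 0 := by
    rw [h0]; rfl
  rw [FormalMultilinearSeries.coeff_ofScalars] at this
  simpa [sub_eq_zero] using this

/-- `1 - 2 t X + X²` -/
noncomputable def dser (t : ℝ) : PowerSeries ℝ :=
  1 - PowerSeries.C (2*t) * PowerSeries.X + PowerSeries.X ^ 2

lemma dser_sums (t : ℝ) : SumsTo (dser t) (fun r => 1 - 2*r*t + r^2) := by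
  intro r _
  have h : HasSum (fun k : ℕ => PowerSeries.coeff k (dser t) * r ^ k)
      (∑ k ∈ Finset.range 3, PowerSeries.coeff k (dser t) * r ^ k) := by
    apply hasSum_sum_of_ne_finset_zero
    intro k hk
    have hk : 3 ≤ k := by simpa using hk
    have h0 : k ≠ 0 := by omega
    have h1 : k ≠ 1 := by omega
    have h2 : k ≠ 2 := by omega
    simp only [dser, map_add, map_sub, PowerSeries.coeff_C_mul, PowerSeries.coeff_X_pow,
      PowerSeries.coeff_X, PowerSeries.coeff_one, h0, h1, h2, if_false]
    ring
  convert h using 1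
  simp only [Finset.sum_range_succ, Finset.sum_range_zero, dser, map_add, map_sub,
    PowerSeries.coeff_C_mul, PowerSeries.coeff_X_pow, PowerSeries.coeff_X, PowerSeries.coeff_one]
  norm_num
  ring

lemma one_sums : SumsTo 1 (fun _ => 1) := by
  intro r _
  convert hasSum_ite_eq (0:ℕ) (1:ℝ) using 2 with k
  by_cases h : k = 0 <;> simp [PowerSeries.coeff_one, h]

lemma dser_pos {t r : ℝ} (ht : t ∈ Set.Icc (-1:ℝ) 1) (hr : |r| < 1/2) :
    0 < 1 - 2*r*t + r^2 := by
  obtain ⟨h1, h2⟩ := ht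
  obtain ⟨h3, h4⟩ := abs_lt.mp hr
  nlinarith [sq_nonneg (r - t), mul_nonneg (sub_nonneg.2 h2) (sub_nonneg.2 h1),
    mul_nonneg (sub_nonneg.2 h2) (by linarith : (0:ℝ) ≤ 1/2 + r),
    mul_nonneg (by linarith : (0:ℝ) ≤ 1 + t) (by linarith : (0:ℝ) ≤ 1/2 - r)]

lemma bonnet_pt (P : ℕ → Polynomial ℝ) (hP : IsLegendre P) (t : ℝ) (ht : t ∈ Set.Icc (-1:ℝ) 1) :
    (P 0).eval t = 1 ∧ (P 1).eval t = t ∧ ∀ k : ℕ, ((k:ℝ)+2) * (P (k+2)).eval t =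
      (2*k+3) * t * (P (k+1)).eval t - (k+1) * (P k).eval t := by
  set F : PowerSeries ℝ := PowerSeries.mk (fun k => (P k).eval t) with hFdef
  have hF : SumsTo F (fun r => (1 - 2*r*t + r^2) ^ (-(1/2) : ℝ)) := by
    intro r hr
    simpa [F] using hP t ht r hr
  have hFF : F * F * dser t = 1 := by
    refine ((hF.mul hF).mul (dser_sums t)).unique (v := _) ?_
    intro r hr
    convert one_sums r hr using 1
    have hp := dser_pos ht hr
    simp only
    rw [← Real.rpow_add hp]
    norm_num
    rw [Real.rpow_neg_one, inv_mul_cancel₀ hp.ne']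
  have h0 : (P 0).eval t = 1 := by
    have := hP t ht 0 (by norm_num)
    have h2 := hasSum_single (f := fun k : ℕ => (P k).eval t * (0:ℝ) ^ k) 0
      (by intro b hb; simp [hb])
    have := this.unique h2
    simpa using this.symm
  have hF0 : F ≠ 0 := by
    intro h; rw [h] at hFF; simp at hFF
  have hd : PowerSeries.derivative ℝ (dser t) = - PowerSeries.C (2*t) + 2 * PowerSeries.X := by
    have hC : PowerSeries.derivative ℝ (PowerSeries.C (2*t)) = 0 :=
      PowerSeries.derivative_C
    have hX : PowerSeries.derivative ℝ (PowerSeries.X : PowerSeries ℝ) = 1 :=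
      PowerSeries.derivative_X
    simp only [dser, map_add, map_sub, Derivation.leibniz, Derivation.leibniz_pow, smul_eq_mul,
      Derivation.map_one_eq_zero, hC, hX]
    simp
  have hode : 2 * (PowerSeries.derivative ℝ F * dser t) + F * PowerSeries.derivative ℝ (dser t) = 0 := by
    have := congrArg (PowerSeries.derivative ℝ) hFF
    simp only [Derivation.leibniz, smul_eq_mul, Derivation.map_one_eq_zero] at this
    have h3 : F * (2 * (PowerSeries.derivative ℝ F * dser t)
        + F * PowerSeries.derivative ℝ (dser t)) = 0 := by
      linear_combination this
    exact (mul_eq_zero.mp h3).resolve_left hF0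
  rw [hd, dser] at hode
  set F' := PowerSeries.derivative ℝ F with hF'
  have hc : ∀ n, PowerSeries.coeff n F' = (P (n+1)).eval t * (n+1) := by
    intro n
    simp [hF', F, PowerSeries.coeff_derivative]
  have hcX : ∀ n, PowerSeries.coeff n (F' * PowerSeries.X) = n * (P n).eval t := by
    intro n
    rcases n with _ | n
    · simp
    · rw [PowerSeries.coeff_succ_mul_X, hc]; push_cast; ring
  have hode2 : F' - PowerSeries.C (2*t) * (F' * PowerSeries.X)
      + (F' * PowerSeries.X) * PowerSeries.X - PowerSeries.C t * F + F * PowerSeries.X = 0 := by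
    have h2 : (2 : PowerSeries ℝ) ≠ 0 := by
      intro h
      have := congrArg (PowerSeries.constantCoeff) h
      rw [show (2 : PowerSeries ℝ) = 1 + 1 by norm_num, map_add, map_one, map_zero] at this
      norm_num at this
    have hC : PowerSeries.C (2*t) = 2 * PowerSeries.C t := by
      rw [map_mul]; congr 1
    apply mul_left_cancel₀ h2
    rw [hC] at hode ⊢
    linear_combination hode
  have hFc : ∀ n, PowerSeries.coeff n F = (P n).eval t := fun n => by simp [F]
  refine ⟨h0, ?_, fun k => ?_⟩
  · have := congrArg (PowerSeries.coeff 0) hode2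
    simp only [map_add, map_sub, PowerSeries.coeff_C_mul, PowerSeries.coeff_zero_mul_X, hc, hcX,
      hFc, h0, map_zero] at this
    norm_num at this
    linarith
  · have := congrArg (PowerSeries.coeff (k+1)) hode2
    simp only [map_add, map_sub, PowerSeries.coeff_C_mul, PowerSeries.coeff_succ_mul_X, hc, hcX,
      hFc, map_zero] at this
    push_cast at this
    linear_combination this

lemma bonnet (P : ℕ → Polynomial ℝ) (hP : IsLegendre P) :
    P 0 = 1 ∧ P 1 = Polynomial.X ∧ ∀ k : ℕ, ((k:Polynomial ℝ)+2) * (P (k+2)) =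
      (2*(k:Polynomial ℝ)+3) * Polynomial.X * (P (k+1)) - ((k:Polynomial ℝ)+1) * (P k) := by
  have hinf : (Set.Icc (-1:ℝ) 1).Infinite := Set.Icc_infinite (by norm_num)
  refine ⟨?_, ?_, fun k => ?_⟩ <;>
    refine Polynomial.eq_of_infinite_eval_eq _ _ (hinf.mono fun t ht => ?_)
  · simpa using (bonnet_pt P hP t ht).1
  · simpa using (bonnet_pt P hP t ht).2.1
  · simpa using (bonnet_pt P hP t ht).2.2 k

lemma deriv_rel (P : ℕ → Polynomial ℝ) (hP : IsLegendre P) (k : ℕ) :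
    (P (k+1)).derivative = Polynomial.X * (P k).derivative + ((k:Polynomial ℝ)+1) * P k ∧
    Polynomial.X * (P (k+1)).derivative - (P k).derivative = ((k:Polynomial ℝ)+1) * P (k+1) := by
  obtain ⟨h0, h1, hb⟩ := bonnet P hP
  induction k with
  | zero => simp [h0, h1]
  | succ k ih =>
    obtain ⟨ha, hb'⟩ := ih
    have hk := hb k
    have hne : (k:Polynomial ℝ) + 2 ≠ 0 := by exact_mod_cast (by omega : k + 2 ≠ 0)
    have hd := congrArg Polynomial.derivative hk
    simp at hd
    have A : (P (k+2)).derivative = Polynomial.X * (P (k+1)).derivative + ((k:Polynomial ℝ)+2) * P (k+1) := by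
      apply mul_left_cancel₀ hne
      linear_combination hd + ((k:Polynomial ℝ)+1) * hb'
    refine ⟨?_, ?_⟩
    · push_cast; linear_combination A
    · push_cast
      linear_combination Polynomial.X * A - hk + Polynomial.X * hb' - ha

lemma eval_neg_one (P : ℕ → Polynomial ℝ) (hP : IsLegendre P) (k : ℕ) :
    (P k).eval (-1) = (-1)^k := by
  obtain ⟨h0, h1, hb⟩ := bonnet_pt P hP (-1) (by norm_num)
  induction k using Nat.strong_induction_on with
  | _ k ih =>
    rcases k with _ | _ | k
    · simp [h0]
    · simp [h1]
    · have := hb k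
      rw [ih k (by omega), ih (k+1) (by omega)] at this
      have hne : (k:ℝ) + 2 ≠ 0 := by positivity
      apply mul_left_cancel₀ hne
      rw [this]; ring

lemma hasDeriv_inner (s : ℝ) : HasDerivAt (fun s : ℝ => 1 - s^2/2) (-s) s := by
  refine (((hasDerivAt_pow 2 s).div_const 2).const_sub 1).congr_deriv ?_
  push_cast
  ring

lemma hasDeriv_comp (Q : Polynomial ℝ) (s : ℝ) :
    HasDerivAt (fun s : ℝ => Q.eval (1 - s^2/2)) (-(s * Q.derivative.eval (1 - s^2/2))) s := by
  have := (Q.hasDerivAt (1 - s^2/2)).comp s (hasDeriv_inner s)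
  refine this.congr_deriv ?_
  ring

lemma A_int (P : ℕ → Polynomial ℝ) (hP : IsLegendre P) (k : ℕ) :
    (2*(k:ℝ)+1) * ∫ s in (0:ℝ)..2, (P k).eval (1 - s^2/2) = 2 := by
  have cont : ∀ Q : Polynomial ℝ, Continuous (fun s : ℝ => Q.eval (1 - s^2/2)) := fun Q =>
    Q.continuous.comp (by fun_prop)
  induction k with
  | zero => simp [(bonnet P hP).1]
  | succ k ih =>
    obtain ⟨ha, hb⟩ := deriv_rel P hP k
    have hder : ∀ s ∈ Set.uIcc (0:ℝ) 2, HasDerivAt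
        (fun s : ℝ => s * ((P (k+1)).eval (1 - s^2/2) + (P k).eval (1 - s^2/2)))
        ((2*(k:ℝ)+3) * (P (k+1)).eval (1 - s^2/2) - (2*(k:ℝ)+1) * (P k).eval (1 - s^2/2)) s := by
      intro s _
      have := (hasDerivAt_id s).mul ((hasDeriv_comp (P (k+1)) s).add (hasDeriv_comp (P k) s))
      refine this.congr_deriv ?_
      have ha' := congrArg (Polynomial.eval (1 - s^2/2)) ha
      have hb' := congrArg (Polynomial.eval (1 - s^2/2)) hb
      simp at ha' hb' ⊢
      linear_combination (-2) * ha' + 2 * hb'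
    have := intervalIntegral.integral_eq_sub_of_hasDerivAt hder
      (((cont _).const_mul _).sub ((cont _).const_mul _) |>.intervalIntegrable _ _)
    rw [intervalIntegral.integral_sub (((cont _).const_mul _).intervalIntegrable _ _)
      (((cont _).const_mul _).intervalIntegrable _ _), intervalIntegral.integral_const_mul,
      intervalIntegral.integral_const_mul, ih] at this
    have e2 : (1:ℝ) - 2^2/2 = -1 := by norm_num
    have e3 : (-1:ℝ)^(k+1) + (-1)^k = 0 := by ring
    rw [e2, eval_neg_one P hP, eval_neg_one P hP, e3] at this
    push_cast
    linear_combination this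

theorem legendre_deriv_weighted_integral (P : ℕ → Polynomial ℝ) (hP : IsLegendre P) (k : ℕ) :
    ∫ t in (-1:ℝ)..1, (2 - 2*t) ^ ((1:ℝ)/2) * (Polynomial.derivative (P k)).eval t =
      2 * (-1 : ℝ) ^ (k + 1) + 2 / (2 * (k : ℝ) + 1) := by
  have cont : ∀ Q : Polynomial ℝ, Continuous (fun s : ℝ => Q.eval (1 - s^2/2)) := fun Q =>
    Q.continuous.comp (by fun_prop)
  have hsub := intervalIntegral.integral_comp_mul_deriv (a := 0) (b := 2)
    (f := fun s : ℝ => 1 - s^2/2) (f' := fun s => -s)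
    (g := fun t => (2 - 2*t) ^ ((1:ℝ)/2) * (Polynomial.derivative (P k)).eval t)
    (fun s _ => hasDeriv_inner s)
    (by fun_prop)
    (by
      refine Continuous.mul ?_ (Polynomial.continuous _)
      exact Continuous.rpow_const (by fun_prop) (fun _ => Or.inr (by norm_num)))
  have e0 : (1:ℝ) - 0^2/2 = 1 := by norm_num
  have e2 : (1:ℝ) - 2^2/2 = -1 := by norm_num
  simp only [e0, e2] at hsub
  rw [intervalIntegral.integral_symm (-1) 1] at hsub
  have hc : ∫ s in (0:ℝ)..2, s * (-(s * (P k).derivative.eval (1 - s^2/2))) =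
      -∫ t in (-1:ℝ)..1, (2 - 2*t) ^ ((1:ℝ)/2) * (Polynomial.derivative (P k)).eval t := by
    rw [← hsub]
    refine intervalIntegral.integral_congr fun s hs => ?_
    rw [Set.uIcc_of_le (by norm_num)] at hs
    have h1 : (2 - 2*(1 - s^2/2) : ℝ) = s^2 := by ring
    simp only [Function.comp, h1]
    rw [← Real.sqrt_eq_rpow, Real.sqrt_sq hs.1]
    ring
  have hparts := intervalIntegral.integral_mul_deriv_eq_deriv_mul (a := 0) (b := 2)
    (u := fun s : ℝ => s) (u' := fun _ => 1)
    (v := fun s : ℝ => (P k).eval (1 - s^2/2))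
    (v' := fun s : ℝ => -(s * (P k).derivative.eval (1 - s^2/2)))
    (fun s _ => hasDerivAt_id s) (fun s _ => hasDeriv_comp _ s)
    (continuous_const.intervalIntegrable _ _)
    ((continuous_id.mul (cont _)).neg.intervalIntegrable _ _)
  have hA := A_int P hP k
  have hne : 2 * (k:ℝ) + 1 ≠ 0 := by positivity
  have hA' : ∫ s in (0:ℝ)..2, (P k).eval (1 - s^2/2) = 2 / (2 * (k:ℝ) + 1) := by
    rw [eq_div_iff hne]; linarith
  rw [hc] at hparts
  norm_num [eval_neg_one P hP] at hparts
  rw [hA'] at hparts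
  norm_num at hparts ⊢
  rw [pow_succ]
  linarith
end

section
/- For every integer k ≥ 0, (3/(2ω₅))·binom(k+4,4)·Λ_k(φ₇) = 245760·(k+1)(k+2)(k+3)(k+4)·(15 − 5k − k²)(−3 + 5k + k²) / ∏_{j=−5,−3,−1,1,3,5,7,9,11,13,15} (2k + j), where Λ_k(φ₇) = ω₅ ∫_{−1}^{1} (C_k^{5/2}(t)/C_k^{5/2}(1)) φ₇(t)(1−t²)² dt and φ₇(t) = 2^{5/2}(1−t)^{1/2}(1+t)². In particular Λ₀(φ₇) > 0, Λ₁(φ₇) > 0, and Λ_k(φ₇) < 0 for all k ≥ 2. -/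
/-- The weight `φ₇(t) = 2^{5/2} (1-t)^{1/2} (1+t)²`. -/
noncomputable def phi7 (t : ℝ) : ℝ := 2 ^ ((5:ℝ)/2) * Real.sqrt (1 - t) * (1 + t) ^ 2

/-- The Funk–Hecke coefficient `Λ_k(φ₇)` in dimension `d = 7`, with `ω₅ = π³`. -/
noncomputable def Lambda7 (C : ℕ → Polynomial ℝ) (k : ℕ) : ℝ :=
  Real.pi ^ 3 *
    ∫ t in (-1:ℝ)..1, ((C k).eval t / (C k).eval 1) * phi7 t * (1 - t^2) ^ 2

open Polynomial in
/-- shift of a sequence -/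
def seqShift (a : ℕ → ℝ) : ℕ → ℝ
  | 0 => 0
  | (k+1) => a k

theorem hasSum_seqShift {a : ℕ → ℝ} {r s : ℝ} (h : HasSum (fun k => r ^ k * a k) s) :
    HasSum (fun k => r ^ k * seqShift a k) (r * s) := by
  rw [← hasSum_nat_add_iff' 1]
  simp only [Finset.sum_range_one, seqShift, mul_zero, sub_zero]
  have e : (fun k => r ^ (k+1) * a k) = fun k => r * (r ^ k * a k) := by funext k; ring
  rw [e]
  exact h.mul_left r

theorem gen_rec (c : ℕ → ℝ) (t : ℝ) (ht : t ∈ Set.Icc (-1:ℝ) 1)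
    (h : ∀ r : ℝ, |r| < 1/2 → HasSum (fun k : ℕ => c k * r ^ k)
      ((1 - 2*r*t + r^2) ^ (-(5/2:ℝ)))) :
    c 0 = 1 ∧ c 1 = 5 * t ∧
      ∀ k : ℕ, ((k:ℝ) + 2) * c (k+2) = (2 * k + 7) * t * c (k+1) - (k + 5) * c k := by
  set g : ℝ → ℝ := fun r => (1 - 2*r*t + r^2) ^ (-(5/2:ℝ)) with hg
  have hsmall : ∀ᶠ r : ℝ in nhds 0, |r| < 1/2 := by
    have : Filter.Tendsto (fun r : ℝ => |r|) (nhds 0) (nhds 0) := by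
      simpa using (continuous_abs (G := ℝ)).tendsto 0
    exact this.eventually (gt_mem_nhds (by norm_num))
  have hpow : HasFPowerSeriesAt g (FormalMultilinearSeries.ofScalars ℝ c) 0 := by
    rw [hasFPowerSeriesAt_iff]
    filter_upwards [hsmall] with r hr
    simpa [FormalMultilinearSeries.coeff_ofScalars, mul_comm, hg] using h r hr
  have hd : ∀ᶠ r : ℝ in nhds 0,
      HasSum (fun k : ℕ => r ^ k * ((k + 1) * c (k+1))) (deriv g r) := by
    obtain ⟨ρ, hρ⟩ := hpow
    have h1 := hρ.fderiv.hasFPowerSeriesAt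
    rw [hasFPowerSeriesAt_iff] at h1
    filter_upwards [h1] with r hr
    have h2 := (ContinuousLinearMap.apply ℝ ℝ (1:ℝ)).hasSum hr
    simp only [zero_add] at h2
    have e : (fun k : ℕ => r ^ k * (((k:ℝ) + 1) * c (k+1))) = fun b =>
        ((ContinuousLinearMap.apply ℝ ℝ) 1)
          (r ^ b • (FormalMultilinearSeries.ofScalars ℝ c).derivSeries.coeff b) := by
      funext k
      simp [FormalMultilinearSeries.derivSeries_coeff_one, FormalMultilinearSeries.coeff_ofScalars]
    rw [e]
    exact h2
  have hz : ∀ᶠ r : ℝ in nhds 0, HasSum (fun k : ℕ => r ^ k *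
      (((k + 1) * c (k+1)) - 2 * t * seqShift (fun k => (k + 1) * c (k+1)) k
        + seqShift (seqShift (fun k => (k + 1) * c (k+1))) k
        - 5 * t * c k + 5 * seqShift c k)) 0 := by
    filter_upwards [hsmall, hd] with r hr hdr
    have h0 : HasSum (fun k : ℕ => r ^ k * c k) (g r) := by
      simpa [mul_comm, hg] using h r hr
    have hpos : 0 < 1 - 2*r*t + r^2 := by
      obtain ⟨h1, h2⟩ := ht
      obtain ⟨h3, h4⟩ := abs_lt.mp hr
      nlinarith [sq_nonneg (r - t), mul_self_nonneg r, mul_nonneg (sub_nonneg.2 h2) (by linarith : (0:ℝ) ≤ 1 + t)]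
    have hder : HasDerivAt g ((-2*t + 2 * r) * (-(5/2:ℝ)) * (1 - 2*r*t + r^2) ^ (-(5/2:ℝ) - 1)) r := by
      have : HasDerivAt (fun r : ℝ => 1 - 2*r*t + r^2) (-2*t + 2 * r) r := by
        have h1 := (((hasDerivAt_id r).const_mul 2).mul_const t).const_sub 1
        have h2 := h1.add ((hasDerivAt_id r).pow 2)
        exact h2.congr_deriv (by simp)
      exact this.rpow_const (Or.inl hpos.ne')
    have hode : (1 - 2*r*t + r^2) * deriv g r = 5 * (t - r) * g r := by
      rw [hder.deriv, Real.rpow_sub_one hpos.ne']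
      simp only [hg]
      field_simp
      ring
    have s1 := hasSum_seqShift hdr
    have s2 := hasSum_seqShift s1
    have s3 := hasSum_seqShift h0
    have := (((hdr.sub (s1.mul_left (2*t))).add s2).sub (h0.mul_left (5*t))).add (s3.mul_left 5)
    have e0 : deriv g r - 2 * t * (r * deriv g r) + r * (r * deriv g r) - 5 * t * g r
        + 5 * (r * g r) = 0 := by linear_combination hode
    rw [e0] at this
    have e1 := funext (fun k : ℕ => (by ring : r ^ k * (((k + 1) * c (k+1)) - 2 * t * seqShift (fun k => (k + 1) * c (k+1)) k
        + seqShift (seqShift (fun k => (k + 1) * c (k+1))) k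
        - 5 * t * c k + 5 * seqShift c k) = r ^ k * ((k + 1) * c (k + 1)) - 2 * t * (r ^ k * seqShift (fun k => (k + 1) * c (k + 1)) k) + r ^ k * seqShift (seqShift fun k => (k + 1) * c (k + 1)) k - 5 * t * (r ^ k * c k) + 5 * (r ^ k * seqShift c k)))
    rw [e1]
    exact this
  have hzero : ∀ k : ℕ, (((k + 1) * c (k+1)) - 2 * t * seqShift (fun k => (k + 1) * c (k+1)) k
        + seqShift (seqShift (fun k => (k + 1) * c (k+1))) k
        - 5 * t * c k + 5 * seqShift c k) = 0 := by
    intro k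
    have : HasFPowerSeriesAt (0 : ℝ → ℝ) (FormalMultilinearSeries.ofScalars ℝ (fun k : ℕ =>
      (((k + 1) * c (k+1)) - 2 * t * seqShift (fun k => (k + 1) * c (k+1)) k
        + seqShift (seqShift (fun k => (k + 1) * c (k+1))) k
        - 5 * t * c k + 5 * seqShift c k))) 0 := by
      rw [hasFPowerSeriesAt_iff]
      filter_upwards [hz] with r hr
      simp only [FormalMultilinearSeries.coeff_ofScalars]
      exact hr
    have h2 := this.eq_zero
    have h3 := congrArg (fun p => FormalMultilinearSeries.coeff p k) h2
    simp only [FormalMultilinearSeries.coeff_ofScalars] at h3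
    rw [h3]
    simp [FormalMultilinearSeries.coeff]
  have hc0 : c 0 = 1 := by
    have h1 := h 0 (by norm_num)
    have h2 : HasSum (fun k : ℕ => c k * (0:ℝ) ^ k) (c 0) := by
      convert hasSum_single (f := fun k : ℕ => c k * (0:ℝ) ^ k) 0 ?_ using 1
      · simp
      · intro k hk; simp [hk]
    have := h2.unique h1
    simpa using this
  refine ⟨hc0, ?_, ?_⟩
  · have := hzero 0
    simp [seqShift, hc0] at this
    linarith
  · intro k
    have h1 := hzero (k+1)
    cases k with
    | zero => simp [seqShift] at h1 ⊢; linarith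
    | succ n =>
      simp only [seqShift] at h1
      push_cast at h1 ⊢
      linarith

open Polynomial in
theorem poly_rec (G : ℕ → ℝ[X]) (hG : IsGegenbauer (5/2) G) :
    G 0 = 1 ∧ G 1 = 5 * X ∧
      ∀ k : ℕ, ((k:ℝ[X]) + 2) * G (k+2) = (2 * (k:ℝ[X]) + 7) * X * G (k+1) - ((k:ℝ[X]) + 5) * G k := by
  have key : ∀ p q : ℝ[X], (∀ t ∈ Set.Icc (-1:ℝ) 1, p.eval t = q.eval t) → p = q := by
    intro p q h
    apply Polynomial.eq_of_infinite_eval_eq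
    exact (Set.Icc_infinite (by norm_num : (-1:ℝ) < 1)).mono h
  have hr := fun t ht => gen_rec (fun k => (G k).eval t) t ht (hG t ht)
  refine ⟨key _ _ fun t ht => ?_, key _ _ fun t ht => ?_, fun k => key _ _ fun t ht => ?_⟩
  · simpa using (hr t ht).1
  · simpa using (hr t ht).2.1
  · simpa using (hr t ht).2.2 k

open Polynomial in
theorem poly_AB (G : ℕ → ℝ[X]) (h0 : G 0 = 1) (h1 : G 1 = 5 * X)
    (hr : ∀ k : ℕ, ((k:ℝ[X]) + 2) * G (k+2) = (2 * (k:ℝ[X]) + 7) * X * G (k+1) - ((k:ℝ[X]) + 5) * G k) (k : ℕ) :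
    ((k:ℝ[X]) + 1) * G (k+1) = X * derivative (G (k+1)) - derivative (G k) ∧
    derivative (G (k+1)) = X * derivative (G k) + ((k:ℝ[X]) + 5) * G k := by
  induction k with
  | zero => simp [h0, h1]; ring
  | succ k ih =>
    obtain ⟨hA, hB⟩ := ih
    have hB' : derivative (G (k+2)) = X * derivative (G (k+1)) + ((k:ℝ[X]) + 6) * G (k+1) := by
      have h := congrArg derivative (hr k)
      simp at h
      have hne : ((k:ℝ[X]) + 2) ≠ 0 := by exact_mod_cast (by omega : k + 2 ≠ 0)
      apply mul_left_cancel₀ hne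
      linear_combination h - ((k:ℝ[X])+5) * hA
    refine ⟨?_, ?_⟩
    · push_cast
      linear_combination hr k - X * hB' + X * hA + hB
    · push_cast
      linear_combination hB'

open Polynomial in
theorem poly_ode (G : ℕ → ℝ[X]) (h0 : G 0 = 1) (h1 : G 1 = 5 * X)
    (hr : ∀ k : ℕ, ((k:ℝ[X]) + 2) * G (k+2) = (2 * (k:ℝ[X]) + 7) * X * G (k+1) - ((k:ℝ[X]) + 5) * G k) (k : ℕ) :
    (1 - X^2) * derivative (derivative (G k)) = 6 * X * derivative (G k) - (k:ℝ[X]) * ((k:ℝ[X])+5) * G k := by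
  cases k with
  | zero => simp [h0]
  | succ k =>
    obtain ⟨hA, hB⟩ := poly_AB G h0 h1 hr k
    have hA' := congrArg derivative hA
    have hB' := congrArg derivative hB
    simp at hA' hB'
    push_cast
    linear_combination hB' + ((k:ℝ[X]) + 6) * hA + X * hA'

open Polynomial in
/-- the functional -/
noncomputable def sqInt (P : ℝ[X]) : ℝ := ∫ t in (-1:ℝ)..1, Real.sqrt (1 - t) * P.eval t

open Polynomial in
theorem sqInt_integrable (P : ℝ[X]) :
    IntervalIntegrable (fun t => Real.sqrt (1 - t) * P.eval t) MeasureTheory.volume (-1) 1 := by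
  apply Continuous.intervalIntegrable
  have := P.continuous
  fun_prop

open Polynomial in
theorem sqInt_add (P Q : ℝ[X]) : sqInt (P + Q) = sqInt P + sqInt Q := by
  unfold sqInt
  rw [← intervalIntegral.integral_add (sqInt_integrable P) (sqInt_integrable Q)]
  congr 1; funext t; simp; ring

open Polynomial in
theorem sqInt_mul (a : ℝ) (P : ℝ[X]) : sqInt (Polynomial.C a * P) = a * sqInt P := by
  unfold sqInt
  rw [← intervalIntegral.integral_const_mul]
  congr 1; funext t; simp; ring

open Polynomial in
theorem sqInt_parts (R : ℝ[X]) :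
    sqInt (2 * (1 - X) * derivative R - 3 * R) = - 4 * Real.sqrt 2 * R.eval (-1) := by
  have h := intervalIntegral.integral_eq_sub_of_hasDerivAt_of_le
    (f := fun t => Real.sqrt (1 - t) * (2 * (1 - X) * R).eval t)
    (f' := fun t => Real.sqrt (1 - t) * (2 * (1 - X) * derivative R - 3 * R).eval t)
    (a := -1) (b := 1) (by norm_num) ?_ ?_ (sqInt_integrable _)
  · unfold sqInt
    rw [h]
    norm_num
    ring
  · have := (2 * (1 - X) * R).continuous
    apply Continuous.continuousOn
    fun_prop
  · intro t ht
    have hpos : 0 < 1 - t := by linarith [ht.2]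
    have h1 : HasDerivAt (fun t : ℝ => Real.sqrt (1 - t)) (-1 / (2 * Real.sqrt (1 - t))) t :=
      ((hasDerivAt_id t).const_sub 1).sqrt hpos.ne'
    have h2 := h1.mul ((2 * (1 - X) * R).hasDerivAt t)
    refine h2.congr_deriv ?_
    have hs : 0 < Real.sqrt (1 - t) := Real.sqrt_pos.2 hpos
    have hs2 : Real.sqrt (1 - t) ^ 2 = 1 - t := Real.sq_sqrt hpos.le
    simp
    field_simp
    rw [hs2]
    ring

open Polynomial in
theorem sqInt_pow (n : ℕ) : (2 * (n:ℝ) + 3) * sqInt ((1 - X)^n) = 4 * Real.sqrt 2 * 2 ^ n := by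
  have h := sqInt_parts ((1 - X)^n)
  have e : (2 * (1 - X) * derivative ((1 - X)^n) - 3 * (1 - X)^n : ℝ[X])
      = Polynomial.C (-(2 * (n:ℝ) + 3)) * (1 - X)^n := by
    cases n with
    | zero => simp [map_ofNat]
    | succ n => simp [derivative_pow, map_ofNat]; ring
  rw [e, sqInt_mul] at h
  simp at h
  norm_num at h
  linarith

open Polynomial in
/-- moments -/
noncomputable def mom (G : ℕ → ℝ[X]) (n k : ℕ) : ℝ := sqInt (G k * (1 - X)^n * (1 - X^2)^2)

open Polynomial in
theorem mom_ode1 (G : ℕ → ℝ[X]) (k : ℕ)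
    (h : (1 - X^2) * derivative (derivative (G k)) = 6 * X * derivative (G k) - (k:ℝ[X]) * ((k:ℝ[X])+5) * G k) :
    (3 - 2 * (k:ℝ)) * (13 + 2 * k) * mom G 1 k = 42 * mom G 0 k := by
  have e := sqInt_parts ((1 - X)^2 * (1+X)^3 * (2 * (1 - X) * derivative (G k) + 3 * G k))
  have e2 : 2 * (1 - X) * derivative ((1 - X)^2 * (1+X)^3 * (2 * (1 - X) * derivative (G k) + 3 * G k))
      - 3 * ((1 - X)^2 * (1+X)^3 * (2 * (1 - X) * derivative (G k) + 3 * G k))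
      = Polynomial.C (-42) * (G k * (1 - X)^0 * (1 - X^2)^2)
        + Polynomial.C ((3 - 2 * (k:ℝ)) * (13 + 2 * k)) * (G k * (1 - X)^1 * (1 - X^2)^2) := by
    simp [derivative_pow, map_ofNat]
    linear_combination 4 * (1 - X)^3 * (1 + X)^2 * h
  rw [e2, sqInt_add, sqInt_mul, sqInt_mul] at e
  simp only [mom]
  simp at e ⊢
  linarith

open Polynomial in
theorem mom_ode2 (G : ℕ → ℝ[X]) (k : ℕ)
    (h : (1 - X^2) * derivative (derivative (G k)) = 6 * X * derivative (G k) - (k:ℝ[X]) * ((k:ℝ[X])+5) * G k) :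
    (5 - 2 * (k:ℝ)) * (15 + 2 * k) * mom G 2 k = 90 * mom G 1 k := by
  have e := sqInt_parts ((1 - X)^3 * (1+X)^3 * (2 * (1 - X) * derivative (G k) + 5 * G k))
  have e2 : 2 * (1 - X) * derivative ((1 - X)^3 * (1+X)^3 * (2 * (1 - X) * derivative (G k) + 5 * G k))
      - 3 * ((1 - X)^3 * (1+X)^3 * (2 * (1 - X) * derivative (G k) + 5 * G k))
      = Polynomial.C (-90) * (G k * (1 - X)^1 * (1 - X^2)^2)
        + Polynomial.C ((5 - 2 * (k:ℝ)) * (15 + 2 * k)) * (G k * (1 - X)^2 * (1 - X^2)^2) := by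
    simp [derivative_pow, map_ofNat]
    linear_combination 4 * (1 - X)^4 * (1 + X)^2 * h
  rw [e2, sqInt_add, sqInt_mul, sqInt_mul] at e
  simp only [mom]
  simp at e ⊢
  linarith

theorem odd_ne (k : ℕ) (m : ℤ) : (2 * (k:ℝ) + (2 * m + 1)) ≠ 0 := by
  exact_mod_cast (by omega : (2 * (k:ℤ) + (2 * m + 1)) ≠ 0)

open Polynomial in
theorem mom_rec (G : ℕ → ℝ[X])
    (hr : ∀ k : ℕ, ((k:ℝ[X]) + 2) * G (k+2) = (2 * (k:ℝ[X]) + 7) * X * G (k+1) - ((k:ℝ[X]) + 5) * G k) (k : ℕ) :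
    ((k:ℝ) + 2) * mom G 0 (k+2)
      = (2 * k + 7) * (mom G 0 (k+1) - mom G 1 (k+1)) - (k + 5) * mom G 0 k := by
  unfold mom
  rw [← sqInt_mul]
  have : Polynomial.C ((k:ℝ) + 2) * (G (k+2) * (1 - X)^0 * (1 - X^2)^2)
    = Polynomial.C (2 * (k:ℝ) + 7) * (G (k+1) * (1 - X)^0 * (1 - X^2)^2)
      + Polynomial.C (-(2 * (k:ℝ) + 7)) * (G (k+1) * (1 - X)^1 * (1 - X^2)^2)
      + Polynomial.C (-((k:ℝ) + 5)) * (G k * (1 - X)^0 * (1 - X^2)^2) := by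
    simp [map_ofNat]
    linear_combination (1 - X^2)^2 * hr k
  rw [this, sqInt_add, sqInt_add, sqInt_mul, sqInt_mul, sqInt_mul]
  ring

/-- closed form of the zeroth moment -/
noncomputable def cf (x : ℝ) : ℝ := -320 * ((x+1)*(x+2)*(x+3)*(x+4)) /
  ((2*x-1)*(2*x+1)*(2*x+3)*(2*x+5)*(2*x+7)*(2*x+9)*(2*x+11))

open Polynomial in
theorem mom_zero (G : ℕ → ℝ[X]) (h0 : G 0 = 1) (h1 : G 1 = 5 * X)
    (hr : ∀ k : ℕ, ((k:ℝ[X]) + 2) * G (k+2) = (2 * (k:ℝ[X]) + 7) * X * G (k+1) - ((k:ℝ[X]) + 5) * G k) (k : ℕ) :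
    mom G 0 k = Real.sqrt 2 * cf k := by
  have p2 := sqInt_pow 2
  have p3 := sqInt_pow 3
  have p4 := sqInt_pow 4
  have p5 := sqInt_pow 5
  norm_num at p2 p3 p4 p5
  have b0 : mom G 0 0 = Real.sqrt 2 * cf (0:ℕ) := by
    unfold mom cf
    have : (G 0 * (1 - X)^0 * (1 - X^2)^2 : ℝ[X]) = Polynomial.C 4 * (1 - X)^2
      + Polynomial.C (-4) * (1 - X)^3 + Polynomial.C 1 * (1 - X)^4 := by
      simp [h0, map_ofNat]; ring
    rw [this, sqInt_add, sqInt_add, sqInt_mul, sqInt_mul, sqInt_mul]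
    norm_num
    linarith
  have b1 : mom G 0 1 = Real.sqrt 2 * cf (1:ℕ) := by
    unfold mom cf
    have : (G 1 * (1 - X)^0 * (1 - X^2)^2 : ℝ[X]) = Polynomial.C 20 * (1 - X)^2
      + Polynomial.C (-40) * (1 - X)^3 + Polynomial.C 25 * (1 - X)^4 + Polynomial.C (-5) * (1 - X)^5 := by
      simp [h1, map_ofNat]; ring
    rw [this, sqInt_add, sqInt_add, sqInt_add, sqInt_mul, sqInt_mul, sqInt_mul, sqInt_mul]
    norm_num
    linarith
  have main : mom G 0 k = Real.sqrt 2 * cf k ∧ mom G 0 (k+1) = Real.sqrt 2 * cf (k+1:ℕ) := by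
    induction k with
    | zero => exact ⟨b0, b1⟩
    | succ k ih =>
      refine ⟨ih.2, ?_⟩
      obtain ⟨i1, i2⟩ := ih
      have hrec := mom_rec G hr k
      have ho := mom_ode1 G (k+1) (poly_ode G h0 h1 hr (k+1))
      have n1 : (2 * (k:ℝ) - 1) ≠ 0 := by have := odd_ne k (-1); norm_num at this; convert this using 1; ring
      have n2 : (1 - 2 * (k:ℝ)) ≠ 0 := by intro h; apply n1; linarith
      have hm1 : mom G 1 (k+1) = 42 * (Real.sqrt 2 * cf (k+1:ℕ)) / ((1 - 2 * (k:ℝ)) * (15 + 2 * k)) := by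
        rw [eq_div_iff (mul_ne_zero n2 (by positivity)), ← i2, ← ho]
        push_cast; ring
      have hk : ((k:ℝ) + 2) ≠ 0 := by positivity
      apply mul_left_cancel₀ hk
      rw [hrec, hm1, i1, i2]
      unfold cf
      push_cast
      rw [show 2 * ((k:ℝ)+1) - 1 = 2*k+1 by ring, show 2 * ((k:ℝ)+1) + 1 = 2*k+3 by ring,
        show 2 * ((k:ℝ)+1) + 3 = 2*k+5 by ring, show 2 * ((k:ℝ)+1) + 5 = 2*k+7 by ring,
        show 2 * ((k:ℝ)+1) + 7 = 2*k+9 by ring, show 2 * ((k:ℝ)+1) + 9 = 2*k+11 by ring,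
        show 2 * ((k:ℝ)+1) + 11 = 2*k+13 by ring,
        show 2 * ((k:ℝ)+1+1) - 1 = 2*k+3 by ring, show 2 * ((k:ℝ)+1+1) + 1 = 2*k+5 by ring,
        show 2 * ((k:ℝ)+1+1) + 3 = 2*k+7 by ring, show 2 * ((k:ℝ)+1+1) + 5 = 2*k+9 by ring,
        show 2 * ((k:ℝ)+1+1) + 7 = 2*k+11 by ring, show 2 * ((k:ℝ)+1+1) + 9 = 2*k+13 by ring,
        show 2 * ((k:ℝ)+1+1) + 11 = 2*k+15 by ring, show (1 - 2 * (k:ℝ)) = -(2*k-1) by ring,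
        show (15 + 2 * (k:ℝ)) = 2*k+15 by ring]
      generalize hx : (k:ℝ) = x at *
      have hx0 : 0 ≤ x := by rw [← hx]; positivity
      field_simp
      ring
  exact main.1

open Polynomial in
theorem eval_one (G : ℕ → ℝ[X]) (h0 : G 0 = 1) (h1 : G 1 = 5 * X)
    (hr : ∀ k : ℕ, ((k:ℝ[X]) + 2) * G (k+2) = (2 * (k:ℝ[X]) + 7) * X * G (k+1) - ((k:ℝ[X]) + 5) * G k) (k : ℕ) :
    (G k).eval 1 = ((k + 4).choose 4 : ℝ) := by
  have hch : ∀ k : ℕ, ((k + 4).choose 4 : ℝ) = (k+1)*(k+2)*(k+3)*(k+4)/24 := by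
    intro k
    induction k with
    | zero => norm_num
    | succ k ih =>
      have h5 : ((k+5).choose 4 : ℝ) * (k+1) = (k+5) * ((k+4).choose 4 : ℝ) := by
        have := Nat.choose_mul_succ_eq (k+4) 4
        have e : k + 4 + 1 - 4 = k + 1 := by omega
        rw [e] at this
        have h6 : (((k+4).choose 4 * (k+4+1) : ℕ) : ℝ) = (((k+4+1).choose 4 * (k+1) : ℕ) : ℝ) := by
          rw [this]
        push_cast at h6
        linarith
      rw [show k + 1 + 4 = k + 5 by ring]
      have hk : ((k:ℝ) + 1) ≠ 0 := by positivity
      apply mul_right_cancel₀ hk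
      rw [h5, ih]; push_cast; ring
  have main : (G k).eval 1 = ((k:ℝ)+1)*(k+2)*(k+3)*(k+4)/24 ∧
      (G (k+1)).eval 1 = ((k:ℝ)+2)*(k+3)*(k+4)*(k+5)/24 := by
    induction k with
    | zero => simp [h0, h1]; norm_num
    | succ k ih =>
      refine ⟨by rw [ih.2]; push_cast; ring, ?_⟩
      have h := congrArg (eval 1) (hr k)
      simp at h
      have hk : ((k:ℝ) + 2) ≠ 0 := by positivity
      apply mul_left_cancel₀ hk
      rw [show k + 1 + 1 = k + 2 by ring, h, ih.1, ih.2]; push_cast; ring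
  rw [main.1, hch]

theorem funk_hecke_coefficients_dimension_seven (C : ℕ → Polynomial ℝ)
    (hC : IsGegenbauer (5/2) C) :
    (∀ k : ℕ,
        3 / (2 * Real.pi ^ 3) * ((k + 4).choose 4 : ℝ) * Lambda7 C k =
          245760 * ((k : ℝ) + 1) * ((k : ℝ) + 2) * ((k : ℝ) + 3) * ((k : ℝ) + 4) *
              (15 - 5 * (k : ℝ) - (k : ℝ) ^ 2) * (-3 + 5 * (k : ℝ) + (k : ℝ) ^ 2) /
            ((2 * (k : ℝ) - 5) * (2 * (k : ℝ) - 3) * (2 * (k : ℝ) - 1) * (2 * (k : ℝ) + 1) *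
              (2 * (k : ℝ) + 3) * (2 * (k : ℝ) + 5) * (2 * (k : ℝ) + 7) * (2 * (k : ℝ) + 9) *
              (2 * (k : ℝ) + 11) * (2 * (k : ℝ) + 13) * (2 * (k : ℝ) + 15))) ∧
      0 < Lambda7 C 0 ∧ 0 < Lambda7 C 1 ∧ ∀ k : ℕ, 2 ≤ k → Lambda7 C k < 0 := by
  obtain ⟨h0, h1, hr⟩ := poly_rec C hC
  have hL : ∀ k : ℕ, ((k + 4).choose 4 : ℝ) * Lambda7 C k =
      Real.pi ^ 3 * (2 ^ ((5:ℝ)/2) * (4 * mom C 0 k - 4 * mom C 1 k + mom C 2 k)) := by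
    intro k
    have he := eval_one C h0 h1 hr k
    have hne : ((k + 4).choose 4 : ℝ) ≠ 0 := by
      exact_mod_cast (Nat.choose_pos (by omega)).ne'
    have hI : (4 * mom C 0 k - 4 * mom C 1 k + mom C 2 k)
        = sqInt (C k * (1 + Polynomial.X)^2 * (1 - Polynomial.X^2)^2) := by
      have : C k * (1 + Polynomial.X)^2 * (1 - Polynomial.X^2)^2
        = Polynomial.C 4 * (C k * (1 - Polynomial.X)^0 * (1 - Polynomial.X^2)^2)
        + Polynomial.C (-4) * (C k * (1 - Polynomial.X)^1 * (1 - Polynomial.X^2)^2)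
        + Polynomial.C 1 * (C k * (1 - Polynomial.X)^2 * (1 - Polynomial.X^2)^2) := by
        simp [map_ofNat]; ring
      rw [this, sqInt_add, sqInt_add, sqInt_mul, sqInt_mul, sqInt_mul]
      unfold mom; ring
    rw [hI]
    unfold Lambda7 sqInt
    rw [mul_left_comm]
    congr 1
    rw [← intervalIntegral.integral_const_mul, ← intervalIntegral.integral_const_mul]
    congr 1
    funext t
    rw [he]
    unfold phi7
    simp
    field_simp
  have h25 : (2:ℝ) ^ ((5:ℝ)/2) * Real.sqrt 2 = 8 := by
    rw [Real.sqrt_eq_rpow, ← Real.rpow_add (by norm_num)]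
    norm_num
  have hpi := Real.pi_pos
  have main : ∀ k : ℕ,
        3 / (2 * Real.pi ^ 3) * ((k + 4).choose 4 : ℝ) * Lambda7 C k =
          245760 * ((k : ℝ) + 1) * ((k : ℝ) + 2) * ((k : ℝ) + 3) * ((k : ℝ) + 4) *
              (15 - 5 * (k : ℝ) - (k : ℝ) ^ 2) * (-3 + 5 * (k : ℝ) + (k : ℝ) ^ 2) /
            ((2 * (k : ℝ) - 5) * (2 * (k : ℝ) - 3) * (2 * (k : ℝ) - 1) * (2 * (k : ℝ) + 1) *
              (2 * (k : ℝ) + 3) * (2 * (k : ℝ) + 5) * (2 * (k : ℝ) + 7) * (2 * (k : ℝ) + 9) *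
              (2 * (k : ℝ) + 11) * (2 * (k : ℝ) + 13) * (2 * (k : ℝ) + 15)) := by
    intro k
    have hode := poly_ode C h0 h1 hr k
    have m0 := mom_zero C h0 h1 hr k
    have m1 := mom_ode1 C k hode
    have m2 := mom_ode2 C k hode
    have n1 : (2 * (k:ℝ) - 1) ≠ 0 := by have := odd_ne k (-1); norm_num at this; convert this using 1; ring
    have n3 : (2 * (k:ℝ) - 3) ≠ 0 := by have := odd_ne k (-2); norm_num at this; convert this using 1; ring
    have n5 : (2 * (k:ℝ) - 5) ≠ 0 := by have := odd_ne k (-3); norm_num at this; convert this using 1; ring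
    have m1' : mom C 1 k = -42 * mom C 0 k / ((2 * (k:ℝ) - 3) * (2 * k + 13)) := by
      rw [eq_div_iff (mul_ne_zero n3 (by positivity))]; linarith
    have m2' : mom C 2 k = -90 * mom C 1 k / ((2 * (k:ℝ) - 5) * (2 * k + 15)) := by
      rw [eq_div_iff (mul_ne_zero n5 (by positivity))]; linarith
    have e : 3 / (2 * Real.pi ^ 3) * ((k + 4).choose 4 : ℝ) * Lambda7 C k
        = 12 * (cf k * (4 + 4 * 42 / ((2 * (k:ℝ) - 3) * (2 * k + 13))
          + 42 * 90 / ((2 * (k:ℝ) - 3) * (2 * k + 13) * ((2 * (k:ℝ) - 5) * (2 * k + 15))))) := by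
      rw [mul_assoc, hL, m2', m1', m0]
      have : (12:ℝ) = 3 / 2 * ((2:ℝ) ^ ((5:ℝ)/2) * Real.sqrt 2) := by rw [h25]; norm_num
      rw [this]
      generalize (2:ℝ) ^ ((5:ℝ)/2) = y
      generalize cf k = z
      field_simp
      ring
    rw [e]
    unfold cf
    have hx0 : (0:ℝ) ≤ k := by positivity
    clear e m0 m1 m2 m1' m2' hode
    generalize (k:ℝ) = x at *
    have gen : ∀ p q : ℝ, p ≠ 0 → q ≠ 0 →
        4 + 4 * 42 / p + 42 * 90 / (p * q) = (4 * p * q + 168 * q + 3780) / (p * q) := by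
      intro p q hp hq
      field_simp
      ring
    have p1 : 2 * x + 13 ≠ 0 := by positivity
    have p2 : 2 * x + 15 ≠ 0 := by positivity
    have p3 : (2*x+1)*(2*x+3)*(2*x+5)*(2*x+7)*(2*x+9)*(2*x+11) ≠ 0 := by positivity
    rw [gen _ _ (mul_ne_zero n3 p1) (mul_ne_zero n5 p2), div_mul_div_comm, mul_div_assoc']
    have num : 12 * (-320 * ((x + 1) * (x + 2) * (x + 3) * (x + 4)) *
        (4 * ((2 * x - 3) * (2 * x + 13)) * ((2 * x - 5) * (2 * x + 15)) +
          168 * ((2 * x - 5) * (2 * x + 15)) + 3780)) =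
        245760 * (x + 1) * (x + 2) * (x + 3) * (x + 4) *
          (15 - 5 * x - x ^ 2) * (-3 + 5 * x + x ^ 2) := by ring
    rw [num]
    congr 1
    ring
  have hsgn : ∀ k : ℕ, ∃ c : ℝ, 0 < c ∧ c * Lambda7 C k =
      (15 - 5 * (k : ℝ) - (k : ℝ) ^ 2) * (-3 + 5 * (k : ℝ) + (k : ℝ) ^ 2) /
        ((2 * (k : ℝ) - 5) * (2 * (k : ℝ) - 3) * (2 * (k : ℝ) - 1)) := by
    intro k
    have hch : (0:ℝ) < ((k + 4).choose 4 : ℝ) := by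
      exact_mod_cast Nat.choose_pos (by omega)
    have h := main k
    have n1 : (2 * (k:ℝ) - 1) ≠ 0 := by have := odd_ne k (-1); norm_num at this; convert this using 1; ring
    have n3 : (2 * (k:ℝ) - 3) ≠ 0 := by have := odd_ne k (-2); norm_num at this; convert this using 1; ring
    have n5 : (2 * (k:ℝ) - 5) ≠ 0 := by have := odd_ne k (-3); norm_num at this; convert this using 1; ring
    refine ⟨3 / (2 * Real.pi ^ 3) * ((k + 4).choose 4 : ℝ) * (((2 * (k : ℝ) + 1) *
              (2 * (k : ℝ) + 3) * (2 * (k : ℝ) + 5) * (2 * (k : ℝ) + 7) * (2 * (k : ℝ) + 9) *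
              (2 * (k : ℝ) + 11) * (2 * (k : ℝ) + 13) * (2 * (k : ℝ) + 15)) /
              (245760 * ((k : ℝ) + 1) * ((k : ℝ) + 2) * ((k : ℝ) + 3) * ((k : ℝ) + 4))),
              by positivity, ?_⟩
    rw [mul_right_comm, h]
    field_simp
  refine ⟨main, ?_, ?_, ?_⟩
  · obtain ⟨c, hc, h⟩ := hsgn 0
    norm_num at h
    exact pos_of_mul_pos_right (by rw [h]; norm_num) hc.le
  · obtain ⟨c, hc, h⟩ := hsgn 1
    norm_num at h
    exact pos_of_mul_pos_right (by rw [h]; norm_num) hc.le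
  · intro k hk
    obtain ⟨c, hc, h⟩ := hsgn k
    have hneg : c * Lambda7 C k < 0 := by
      rw [h]
      rcases Nat.lt_or_ge k 3 with h3 | h3
      · have : k = 2 := by omega
        subst this
        norm_num
      · have h3' : (3:ℝ) ≤ k := by exact_mod_cast h3
        apply div_neg_of_neg_of_pos
        · apply mul_neg_of_neg_of_pos <;> nlinarith
        · have a : 0 < 2 * (k:ℝ) - 5 := by linarith
          have b : 0 < 2 * (k:ℝ) - 3 := by linarith
          have d : 0 < 2 * (k:ℝ) - 1 := by linarith
          positivity
    by_contra hcon
    push Not at hcon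
    have := mul_nonneg hc.le hcon
    linarith
end
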